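/- Let A be an m×m real matrix all of whose column sums equal S_A, let B be any n×n real matrix, and let k ≥ 1. If v is a vector of length m with (Aᵀ·A)·v = ρ·v and ∑_i v(i) = 0, then the Gramian of the aggregated compound C_A = n^k·(A ⊗ E_n) + (E_m ⊗ B) satisfies (C_Aᵀ·C_A)·(v ⊗ e_n) = (n^(2k+2)·ρ)·(v ⊗ e_n). Hence if ξ is a non-dominant singular value of A (with right singular vector orthogonal to e_m), then n^(k+1)·ξ is a singular value of C_A. -/

import Mathlib

open Kronecker Matrix

/-!
On a vector `v ⊗ e` with `∑ v = 0`, the summand `E ⊗ B` vanishes because `E v = 0`, so the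
aggregated compound acts as a multiple of `A` on the first factor. Constant column sums of `A` make
the entries of `A v` sum to zero as well, so the same computation applies to the transpose, which is
the aggregated compound of `Aᵀ` and `Bᵀ`.
-/

section

variable {l m n p R : Type*}

theorem sum_mulVec_of_forall_sum_col_eq [Fintype l] [Fintype m] [NonUnitalNonAssocSemiring R]
    {A : Matrix l m R} {s : R} (hA : ∀ j, ∑ i, A i j = s) (v : m → R) :
    ∑ i, (A *ᵥ v) i = s * ∑ j, v j := by
  calc ∑ i, (A *ᵥ v) i = ∑ j, ∑ i, A i j * v j := Finset.sum_comm
    _ = s * ∑ j, v j := by simp only [← Finset.sum_mul, hA, Finset.mul_sum]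

variable [CommSemiring R]

theorem kronecker_mulVec_mul [Fintype m] [Fintype n]
    (A : Matrix l m R) (B : Matrix p n R) (v : m → R) (w : n → R) :
    (A ⊗ₖ B) *ᵥ (fun x => v x.1 * w x.2) = fun x => (A *ᵥ v) x.1 * (B *ᵥ w) x.2 := by
  ext ⟨i, q⟩
  simp only [mulVec, dotProduct, kronecker_apply, Fintype.sum_prod_type, mul_mul_mul_comm,
    Finset.sum_mul_sum]

/-- The aggregated compound `c • (A ⊗ E) + E ⊗ B`, where `E` is the all-ones matrix of the
appropriate shape. The factors may be rectangular, and the weight `c`, which is `n ^ k` for the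
compound with parameter `k`, is arbitrary. -/
def aggregatedCompound (c : R) (A : Matrix l m R) (B : Matrix p n R) :
    Matrix (l × p) (m × n) R :=
  c • (A ⊗ₖ (of fun _ _ => 1)) + (of fun _ _ => 1) ⊗ₖ B

theorem transpose_aggregatedCompound (c : R) (A : Matrix l m R) (B : Matrix p n R) :
    (aggregatedCompound c A B)ᵀ = aggregatedCompound c Aᵀ Bᵀ :=
  rfl

theorem aggregatedCompound_mulVec_comp_fst [Fintype m] [Fintype n]
    (c : R) (A : Matrix l m R) (B : Matrix p n R) {v : m → R} (hv : ∑ j, v j = 0) :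
    aggregatedCompound c A B *ᵥ (v ∘ Prod.fst)
      = (c * Fintype.card n) • ((A *ᵥ v) ∘ Prod.fst) := by
  have hfst : v ∘ Prod.fst = fun x : m × n => v x.1 * (1 : n → R) x.2 := by
    ext x
    simp
  have hA : (A ⊗ₖ (of fun _ _ => 1 : Matrix p n R)) *ᵥ (v ∘ Prod.fst)
      = (Fintype.card n : R) • ((A *ᵥ v) ∘ Prod.fst) := by
    rw [hfst, kronecker_mulVec_mul]
    ext x
    simp [mulVec, dotProduct, mul_comm]
  have hB : ((of fun _ _ => 1 : Matrix l m R) ⊗ₖ B) *ᵥ (v ∘ Prod.fst) = 0 := by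
    rw [hfst, kronecker_mulVec_mul]
    ext x
    simp [mulVec, dotProduct, hv]
  rw [aggregatedCompound, add_mulVec, smul_mulVec, hA, hB, add_zero, smul_smul]

theorem aggregated_compound_gramian_from_A_general
    [Fintype l] [Fintype m] [Fintype n] [Fintype p]
    (c : R) (A : Matrix l m R) (B : Matrix p n R) {s : R} (hA : ∀ j, ∑ i, A i j = s)
    {v : m → R} {ρ : R} (hv : (Aᵀ * A) *ᵥ v = ρ • v) (hsum : ∑ j, v j = 0) :
    ((aggregatedCompound c A B)ᵀ * aggregatedCompound c A B) *ᵥ (v ∘ Prod.fst)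
      = (c ^ 2 * Fintype.card n * Fintype.card p * ρ) • (v ∘ Prod.fst) := by
  have hAv : ∑ i, (A *ᵥ v) i = 0 := by
    rw [sum_mulVec_of_forall_sum_col_eq hA, hsum, mul_zero]
  have hρ : ((Aᵀ *ᵥ (A *ᵥ v)) ∘ Prod.fst : m × n → R) = ρ • (v ∘ Prod.fst) := by
    rw [mulVec_mulVec, hv]
    rfl
  rw [← mulVec_mulVec, aggregatedCompound_mulVec_comp_fst c A B hsum, mulVec_smul,
    transpose_aggregatedCompound, aggregatedCompound_mulVec_comp_fst c Aᵀ Bᵀ hAv, hρ,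
    smul_smul, smul_smul]
  congr 1
  ring

end

/-- If all column sums of `A` equal `S_A`, and `v` satisfies
`(Aᵀ·A)·v = ρ·v` with `∑ v = 0`, then the Gramian of the aggregated compound
`C_A = n^k • (A ⊗ E_n) + (E_m ⊗ B)` satisfies
`(C_Aᵀ·C_A)·(v ⊗ e_n) = n^(2k+2)·ρ·(v ⊗ e_n)`. -/
theorem aggregated_compound_gramian_from_A
    {m n k : ℕ} (hk : 1 ≤ k)
    (A : Matrix (Fin m) (Fin m) ℝ) (B : Matrix (Fin n) (Fin n) ℝ) (SA : ℝ)
    (hAcol : ∀ j, ∑ i, A i j = SA)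
    (v : Fin m → ℝ) (ρ : ℝ)
    (hv : (Aᵀ * A).mulVec v = ρ • v) (hsum : ∑ i, v i = 0)
    (C : Matrix (Fin m × Fin n) (Fin m × Fin n) ℝ)
    (hC : C = (n : ℝ) ^ k • (A ⊗ₖ (Matrix.of fun _ _ => (1 : ℝ)))
            + ((Matrix.of fun _ _ => (1 : ℝ)) ⊗ₖ B)) :
    (Cᵀ * C).mulVec (fun ip : Fin m × Fin n => v ip.1)
      = ((n : ℝ) ^ (2 * k + 2) * ρ) • fun ip : Fin m × Fin n => v ip.1 := by
  have hpow : (n : ℝ) ^ (2 * k + 2) = ((n : ℝ) ^ k) ^ 2 * n * n := by ring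
  obtain rfl : C = aggregatedCompound ((n : ℝ) ^ k) A B := hC
  simpa only [hpow, Fintype.card_fin, Function.comp_def] using
    aggregated_compound_gramian_from_A_general ((n : ℝ) ^ k) A B hAcol hv hsum
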